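/- Assume char(F) = 3. Then every word a ∈ M with a ≠ 0 in A_{3,d} satisfies deg(a) ≤ 2d + 7; equivalently, every word of length greater than 2d + 7 in the letters x_1,…,x_d, x_1^T,…,x_d^T is zero in A_{3,d}. -/

import Mathlib

open FreeAlgebra MulOpposite

/-- The alphabet: `(k, false)` is the letter `x_{k+1}`, `(k, true)` is `x_{k+1}ᵀ`. -/
abbrev Ltr (d : ℕ) := Fin d × Bool

/-- The free (unital) associative algebra on the `2d` letters.  The free non-unital
algebra `M_F` sits inside it as the span of the nonempty words. -/
abbrev FA (F : Type) [Field F] (d : ℕ) := FreeAlgebra F (Ltr d)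

variable (F : Type) [Field F] (d : ℕ)

/-- The word in the free algebra corresponding to a list of letters
(the empty list gives `1`, the unit). -/
def wordOf (l : List (Ltr d)) : FA F d := (l.map (FreeAlgebra.ι F)).prod

/-- The transpose: the linear anti-automorphism with `x ↦ xᵀ`, `xᵀ ↦ x`. -/
def tp (a : FA F d) : FA F d :=
  ((FreeAlgebra.lift F fun p : Ltr d => op (FreeAlgebra.ι F (p.1, !p.2))) a).unop

/-- `ā = a - aᵀ`. -/
def bar (a : FA F d) : FA F d := a - tp F d a

/-- `T(a,b,c) = a b̄ c̄ + b̄ aᵀ c̄ + b̄ c̄ a`. -/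
def Trel (a b c : FA F d) : FA F d :=
  a * bar F d b * bar F d c + bar F d b * tp F d a * bar F d c + bar F d b * bar F d c * a

/-- The copy of the free non-unital algebra `M_F`, i.e. the span of the nonempty words. -/
def MFsub : Submodule F (FA F d) :=
  Submodule.span F {w | ∃ l : List (Ltr d), l ≠ [] ∧ w = wordOf F d l}

/-- The two-sided ideal such that `A_{3,d} = M_F / (idealA ∩ M_F)`: it is generated by
`a³` for `a ∈ M_F` together with `T(a,b,c)` for `a, b, c ∈ M_F`.  (Since all generators lie in
`M_F`, its intersection with `M_F` is exactly the two-sided ideal of the non-unital algebra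
`M_F` generated by these elements; in fact it is contained in `M_F`.)
An element `u ∈ M_F` is zero in `A_{3,d}` iff `u ∈ idealA F d`. -/
def idealA : TwoSidedIdeal (FA F d) :=
  TwoSidedIdeal.span
    ({x | ∃ a ∈ MFsub F d, x = a ^ 3} ∪
     {x | ∃ a ∈ MFsub F d, ∃ b ∈ MFsub F d, ∃ c ∈ MFsub F d, x = Trel F d a b c})

/-!
In characteristic 3 the polarised cube identity and `T` hold as soon as one argument is a scalar,
so they hold on the whole unital quotient `R = FA / idealA`, which is a star ring under the
transpose.  There `T` makes the two-sided ideal `J` generated by the skew elements satisfy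
`J⁴ = 0`, while `R / J` is commutative with trivial involution.

By descending induction on `k = 3, 2, 1, 0`, a product of `k` skew elements interleaved with at
least `2d + 8 - 2k` letters vanishes.  Replacing a letter by its transpose or swapping two letters
costs a further skew element and at most two letters, so at stage `k` both are free.  The polarised
cube identity brings all but at most one letter to the left of the skew elements, where more than
`2d` letters can be sorted to start with the cube of a letter.
-/

section Words

variable {α β ι : Type*}

theorem apply_eq_of_perm {f : List α → β} {n : ℕ}
    (swap : ∀ l₁ a b l₂, l₁.length + l₂.length + 2 = n →
      f (l₁ ++ a :: b :: l₂) = f (l₁ ++ b :: a :: l₂))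
    {l l' : List α} (h : l.Perm l') (hl : l.length = n) : f l = f l' := by
  suffices ∀ l₁ : List α, l₁.length + l.length = n → f (l₁ ++ l) = f (l₁ ++ l') from
    this [] (by simpa using hl)
  clear hl
  induction h with
  | nil => exact fun _ _ => rfl
  | cons a _ ih => exact fun l₁ hn => by simpa using ih (l₁ ++ [a]) (by grind)
  | swap a b l => exact fun l₁ hn => swap l₁ b a l (by grind)
  | trans h₁ _ ih₁ ih₂ =>
    exact fun l₁ hn => (ih₁ l₁ hn).trans (ih₂ l₁ (by rwa [← h₁.length_eq]))

theorem exists_perm_cons_cons_cons [Fintype ι] {l : List ι} (hl : 2 * Fintype.card ι < l.length) :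
    ∃ i t, l.Perm (i :: i :: i :: t) := by
  classical
  have hsum : ∑ _i : ι, 2 < ∑ i, l.count i := by
    have hcard := Multiset.sum_count_eq_card (s := Finset.univ) (m := (l : Multiset ι)) (by simp)
    simp only [Multiset.coe_count, Multiset.coe_card] at hcard
    simpa [hcard, mul_comm] using hl
  obtain ⟨i, -, hi⟩ := Finset.exists_lt_of_sum_lt hsum
  obtain ⟨t, ht⟩ := (List.replicate_sublist_iff.mpr hi).exists_perm_append
  exact ⟨i, t, ht⟩

theorem apply_eq_map_false {f : List (ι × Bool) → β} {n : ℕ}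
    (flip : ∀ l₁ s l₂, l₁.length + l₂.length + 1 = n →
      f (l₁ ++ s :: l₂) = f (l₁ ++ (s.1, false) :: l₂))
    {l : List (ι × Bool)} (hl : l.length = n) : f l = f ((l.map Prod.fst).map (·, false)) := by
  suffices ∀ l₁ : List (ι × Bool), l₁.length + l.length = n →
      f (l₁ ++ l) = f (l₁ ++ (l.map Prod.fst).map (·, false)) from this [] (by simpa using hl)
  clear hl
  induction l with
  | nil => exact fun _ _ => rfl
  | cons s l ih =>
    intro l₁ hn
    rw [List.length_cons] at hn
    rw [flip l₁ s l (by omega)]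
    simpa using ih (l₁ ++ [(s.1, false)]) (by grind)

theorem apply_eq_zero_of_swap_flip_cube [Zero β] [Fintype ι] {f : List (ι × Bool) → β}
    {n : ℕ} (swap : ∀ l₁ s t l₂, l₁.length + l₂.length + 2 = n →
      f (l₁ ++ s :: t :: l₂) = f (l₁ ++ t :: s :: l₂))
    (flip : ∀ l₁ s l₂, l₁.length + l₂.length + 1 = n →
      f (l₁ ++ s :: l₂) = f (l₁ ++ (s.1, false) :: l₂))
    (cube : ∀ s l, f (s :: s :: s :: l) = 0)
    (hn : 2 * Fintype.card ι < n) {l : List (ι × Bool)} (hl : l.length = n) : f l = 0 := by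
  obtain ⟨i, t, ht⟩ := exists_perm_cons_cons_cons (l := l.map Prod.fst) (by simpa [hl] using hn)
  rw [apply_eq_map_false flip hl, apply_eq_of_perm swap (ht.map (·, false)) (by simpa using hl)]
  exact cube _ _

/-- The word of the transpose of a product of letters: reversed, with each letter `x_i` exchanged
with its transpose. -/
def transposeWord (l : List (ι × Bool)) : List (ι × Bool) :=
  (l.map fun s => (s.1, !s.2)).reverse

@[simp]
theorem length_transposeWord (l : List (ι × Bool)) : (transposeWord l).length = l.length := by
  simp [transposeWord]

theorem transposeWord_cons (s : ι × Bool) (l : List (ι × Bool)) :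
    transposeWord (s :: l) = transposeWord l ++ [(s.1, !s.2)] := by
  simp [transposeWord]

end Words

/-- A star ring of characteristic dividing 3 in which cubing is additive and the relation
`T(a, b, c) = 0` holds.  This is the structure on `FA / idealA`; unlike `a ^ 3 = 0`, these
identities also hold for the unit, so no separate treatment of the empty word is needed. -/
class CubicMixedRing (R : Type*) [Ring R] [StarRing R] : Prop where
  three_eq_zero : (3 : R) = 0
  add_pow_three : ∀ a b : R, (a + b) ^ 3 = a ^ 3 + b ^ 3
  mixed_eq_zero : ∀ a b c : R, a * (b - star b) * (c - star c) +
    (b - star b) * star a * (c - star c) + (b - star b) * (c - star c) * a = 0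

section SkewProducts

variable {R : Type*} [Ring R] [StarRing R]

theorem sub_star_mem_skewAdjoint (x : R) : x - star x ∈ skewAdjoint R := by
  rw [skewAdjoint.mem_iff, star_sub, star_star, neg_sub]

theorem star_mul_add_mul_mem_skewAdjoint {a : R} (ha : a ∈ skewAdjoint R) (x : R) :
    star x * a + a * x ∈ skewAdjoint R := by
  rw [skewAdjoint.mem_iff] at ha ⊢
  simp [ha]

theorem commutator_eq_sub_star (x y : R) :
    x * y - y * x = (x * y - star (x * y)) - (y - star y) * star x - y * (x - star x) := by
  rw [star_mul]
  noncomm_ring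

variable [CubicMixedRing R] {a b c e : R}

open CubicMixedRing

theorem sum_perm_mul_eq_zero (a b c : R) :
    a * b * c + a * c * b + b * a * c + b * c * a + c * a * b + c * b * a = 0 := by
  have habc := add_pow_three (a + b) c
  have hac := add_pow_three a c
  have hbc := add_pow_three b c
  linear_combination (norm := noncomm_ring) habc - hac - hbc

theorem skew_mixed_eq_zero (x : R) (hb : b ∈ skewAdjoint R) (hc : c ∈ skewAdjoint R) :
    x * b * c + b * star x * c + b * c * x = 0 := by
  have h := mixed_eq_zero x b c
  rw [skewAdjoint.mem_iff.mp hb, skewAdjoint.mem_iff.mp hc] at h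
  linear_combination (norm := noncomm_ring)
    h - three_eq_zero (R := R) * (x * b * c + b * star x * c + b * c * x)

theorem skew_mul_mul_skew (x : R) (hb : b ∈ skewAdjoint R) (hc : c ∈ skewAdjoint R) :
    b * x * c = -(star x * b * c) - b * c * star x := by
  have h := skew_mixed_eq_zero (star x) hb hc
  rw [star_star] at h
  linear_combination (norm := noncomm_ring) h

theorem three_skew_reverse (ha : a ∈ skewAdjoint R) (hb : b ∈ skewAdjoint R)
    (hc : c ∈ skewAdjoint R) : c * b * a = -(a * b * c) := by
  have hT := skew_mixed_eq_zero a hc hb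
  have hT' := skew_mixed_eq_zero c ha hb
  rw [skewAdjoint.mem_iff.mp ha] at hT
  rw [skewAdjoint.mem_iff.mp hc] at hT'
  linear_combination (norm := noncomm_ring) hT + hT'

theorem four_skew_eq_zero (ha : a ∈ skewAdjoint R) (hb : b ∈ skewAdjoint R)
    (hc : c ∈ skewAdjoint R) (he : e ∈ skewAdjoint R) : a * b * c * e = 0 := by
  have hT := skew_mixed_eq_zero (a * b) hc he
  rw [star_mul, skewAdjoint.mem_iff.mp ha, skewAdjoint.mem_iff.mp hb] at hT
  linear_combination (norm := noncomm_ring) hT - three_skew_reverse ha hb hc * e -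
    three_skew_reverse ha he hc * b + a * three_skew_reverse hb hc he

theorem three_skew_mul (x : R) (ha : a ∈ skewAdjoint R) (hb : b ∈ skewAdjoint R)
    (hc : c ∈ skewAdjoint R) : a * b * c * x = star x * a * b * c := by
  have hab := skew_mixed_eq_zero (star x) ha hb
  have hbc := skew_mixed_eq_zero x hb hc
  rw [star_star] at hab
  linear_combination (norm := noncomm_ring) a * hbc - hab * c

theorem four_skew_insert_left (x : R) (ha : a ∈ skewAdjoint R) (hb : b ∈ skewAdjoint R)
    (hc : c ∈ skewAdjoint R) (he : e ∈ skewAdjoint R) : a * x * b * c * e = 0 := by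
  have h := three_skew_mul (star x) hb hc he
  rw [star_star] at h
  linear_combination (norm := noncomm_ring) four_skew_eq_zero ha hb hc he * star x - a * h

theorem four_skew_insert_right (x : R) (ha : a ∈ skewAdjoint R) (hb : b ∈ skewAdjoint R)
    (hc : c ∈ skewAdjoint R) (he : e ∈ skewAdjoint R) : a * b * c * x * e = 0 := by
  rw [three_skew_mul x ha hb hc]
  linear_combination (norm := noncomm_ring) star x * four_skew_eq_zero ha hb hc he

theorem four_skew_insert_middle (x : R) (ha : a ∈ skewAdjoint R) (hb : b ∈ skewAdjoint R)
    (hc : c ∈ skewAdjoint R) (he : e ∈ skewAdjoint R) : a * b * x * c * e = 0 := by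
  linear_combination (norm := noncomm_ring) a * skew_mul_mul_skew x hb hc * e -
    four_skew_insert_left (star x) ha hb hc he - four_skew_insert_right (star x) ha hb hc he

theorem four_skew_insert_middle_right (x y : R) (ha : a ∈ skewAdjoint R) (hb : b ∈ skewAdjoint R)
    (hc : c ∈ skewAdjoint R) (he : e ∈ skewAdjoint R) : a * b * x * c * y * e = 0 := by
  linear_combination (norm := noncomm_ring) a * b * x * skew_mul_mul_skew y hc he -
    four_skew_insert_middle (x * star y) ha hb hc he -
    four_skew_insert_middle x ha hb hc he * star y

theorem four_skew_interleaved_eq_zero (x y z : R) (ha : a ∈ skewAdjoint R)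
    (hb : b ∈ skewAdjoint R) (hc : c ∈ skewAdjoint R) (he : e ∈ skewAdjoint R) :
    a * x * b * y * c * z * e = 0 := by
  linear_combination (norm := noncomm_ring) skew_mul_mul_skew x ha hb * y * c * z * e -
    star x * four_skew_insert_middle_right y z ha hb hc he -
    four_skew_insert_middle_right (star x * y) z ha hb hc he

theorem commutator_mul_three_skew_eq_zero (x y : R) (ha : a ∈ skewAdjoint R)
    (hb : b ∈ skewAdjoint R) (hc : c ∈ skewAdjoint R) : (x * y - y * x) * a * b * c = 0 := by
  have hxy := four_skew_eq_zero (sub_star_mem_skewAdjoint (x * y)) ha hb hc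
  have hy := four_skew_insert_left (star x) (sub_star_mem_skewAdjoint y) ha hb hc
  have hx := four_skew_eq_zero (sub_star_mem_skewAdjoint x) ha hb hc
  rw [commutator_eq_sub_star]
  linear_combination (norm := noncomm_ring) hxy - hy - y * hx

theorem three_skew_insert_mul (x y : R) (ha : a ∈ skewAdjoint R) (hb : b ∈ skewAdjoint R)
    (hc : c ∈ skewAdjoint R) : a * x * b * c * y = star y * a * x * b * c := by
  have hsum := three_skew_mul y (star_mul_add_mul_mem_skewAdjoint ha x) hb hc
  have hcomm := commutator_mul_three_skew_eq_zero (star y) (star x) ha hb hc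
  linear_combination (norm := noncomm_ring) hsum - star x * three_skew_mul y ha hb hc + hcomm

theorem mul_mul_of_commutator_eq_zero {p q e u g : R} (hl : u * (p * q - q * p) * e * g = 0)
    (hr : u * e * (p * q - q * p) * g = 0) :
    u * e * p * q * g = -(u * p * q * e * g) + u * p * e * q * g + u * q * e * p * g := by
  have hperm := sum_perm_mul_eq_zero p q e
  linear_combination (norm := noncomm_ring)
    three_eq_zero (R := R) * (u * e * p * q * g + u * p * q * e * g) - u * hperm * g - hl - hr

end SkewProducts

section StarWords

variable {R ι : Type*} [Ring R] [StarRing R] (x : ι → R)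

/-- The element of a star ring named by the letter `(i, b)`: `x i`, or `star (x i)` if `b`. -/
def starLetter (s : ι × Bool) : R := if s.2 then star (x s.1) else x s.1

/-- The value of a word in the letters `x i` and `star (x i)`. -/
def starWord (l : List (ι × Bool)) : R := (l.map (starLetter x)).prod

@[simp]
theorem starWord_nil : starWord x [] = 1 := rfl

@[simp]
theorem starWord_cons (s : ι × Bool) (l : List (ι × Bool)) :
    starWord x (s :: l) = starLetter x s * starWord x l := by
  simp [starWord]

@[simp]
theorem starWord_append (l l' : List (ι × Bool)) :
    starWord x (l ++ l') = starWord x l * starWord x l' := by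
  simp [starWord]

theorem star_starLetter (s : ι × Bool) : star (starLetter x s) = starLetter x (s.1, !s.2) := by
  rcases s with ⟨i, _ | _⟩ <;> simp [starLetter]

theorem star_starWord (l : List (ι × Bool)) :
    star (starWord x l) = starWord x (transposeWord l) := by
  induction l with
  | nil => simp [transposeWord]
  | cons s l ih => simp [transposeWord_cons, ih, star_starLetter]

theorem starLetter_sub_mem_skewAdjoint (s : ι × Bool) :
    starLetter x s - starLetter x (s.1, false) ∈ skewAdjoint R := by
  rcases s with ⟨i, _ | _⟩
  · simp [zero_mem]
  · simpa [starLetter] using neg_mem (sub_star_mem_skewAdjoint (x i))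

variable {x}

theorem starLetter_pow_three_eq_zero (hx : ∀ i, x i ^ 3 = 0) (s : ι × Bool) :
    starLetter x s ^ 3 = 0 := by
  rcases s with ⟨i, _ | _⟩ <;> simp [starLetter, hx, ← star_pow]

theorem mul_commutator_mul_eq_zero {f g : R} {n : ℕ}
    (h : ∀ s ∈ skewAdjoint R, ∀ u v, n ≤ u.length + v.length + 2 →
      f * starWord x u * s * starWord x v * g = 0)
    (p q : ι × Bool) (u v : List (ι × Bool)) (hn : n ≤ u.length + v.length + 2) :
    f * starWord x u * (starLetter x p * starLetter x q - starLetter x q * starLetter x p) *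
      starWord x v * g = 0 := by
  rw [commutator_eq_sub_star]
  have hpq := h _ (sub_star_mem_skewAdjoint (starLetter x p * starLetter x q)) u v hn
  have hq := h _ (sub_star_mem_skewAdjoint (starLetter x q)) u ((p.1, !p.2) :: v) (by grind)
  have hp := h _ (sub_star_mem_skewAdjoint (starLetter x p)) (u ++ [q]) v (by grind)
  simp only [starWord_append, starWord_cons, starWord_nil, mul_one, ← star_starLetter] at hq hp
  linear_combination (norm := noncomm_ring) hpq - hq - hp

variable [Fintype ι]

theorem starWord_mul_eq_zero (hx : ∀ i, x i ^ 3 = 0) {g : R} {l : List (ι × Bool)}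
    (hl : 2 * Fintype.card ι < l.length)
    (h : ∀ s ∈ skewAdjoint R, ∀ u v, l.length ≤ u.length + v.length + 2 →
      starWord x u * s * starWord x v * g = 0) :
    starWord x l * g = 0 := by
  refine apply_eq_zero_of_swap_flip_cube (f := fun l => starWord x l * g) ?_ ?_ ?_ hl rfl
  · intro u p q v hn
    have := mul_commutator_mul_eq_zero (f := 1) (g := g)
      (by simpa only [one_mul] using h) p q u v hn.ge
    simp only [starWord_append, starWord_cons]
    linear_combination (norm := noncomm_ring) this
  · intro u s v hn
    have := h _ (starLetter_sub_mem_skewAdjoint x s) u v (by omega)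
    simp only [starWord_append, starWord_cons]
    linear_combination (norm := noncomm_ring) this
  · intro s l
    simp only [starWord_cons]
    linear_combination (norm := noncomm_ring) starLetter_pow_three_eq_zero hx s * starWord x l * g

variable [CubicMixedRing R]

theorem starWord_mul_mul_starWord_mul_eq_zero (hx : ∀ i, x i ^ 3 = 0) {e g : R} {m : ℕ}
    (hm : 2 * Fintype.card ι + 2 ≤ m)
    (hl : ∀ s ∈ skewAdjoint R, ∀ u v w, m ≤ u.length + v.length + w.length + 2 →
      starWord x u * s * starWord x v * e * starWord x w * g = 0)
    (hr : ∀ s ∈ skewAdjoint R, ∀ u v w, m ≤ u.length + v.length + w.length + 2 →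
      starWord x u * e * starWord x v * s * starWord x w * g = 0)
    (u v : List (ι × Bool)) (h : m ≤ u.length + v.length) :
    starWord x u * e * starWord x v * g = 0 := by
  have short : v.length ≤ 1 → starWord x u * e * starWord x v * g = 0 := fun hv => by
    have := starWord_mul_eq_zero hx (g := e * starWord x v * g) (l := u) (by omega)
      fun s hs l₁ l₂ hn => by
        simpa only [mul_assoc] using hl s hs l₁ l₂ v (by omega)
    simpa only [mul_assoc] using this
  match v with
  | [] => exact short (by simp)
  | [p] => exact short (by simp)
  | p :: q :: v =>
    simp only [List.length_cons] at h
    have left := mul_commutator_mul_eq_zero (f := 1) (g := e * starWord x v * g)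
      (n := m - v.length) (fun s hs l₁ l₂ hn => by
        simpa only [mul_assoc, one_mul] using hl s hs l₁ l₂ v (by omega)) p q u [] (by grind)
    have right := mul_commutator_mul_eq_zero (f := starWord x u * e) (g := g)
      (n := m - u.length) (fun s hs l₁ l₂ hn => hr s hs u l₁ l₂ (by omega)) p q [] v (by grind)
    simp only [starWord_nil, one_mul, mul_one] at left right
    have move := mul_mul_of_commutator_eq_zero (u := starWord x u) (g := starWord x v * g)
      (by simpa only [mul_assoc] using left) (by simpa only [mul_assoc] using right)
    have hpq := starWord_mul_mul_starWord_mul_eq_zero hx hm hl hr (u ++ [p, q]) v (by grind)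
    have hp := starWord_mul_mul_starWord_mul_eq_zero hx hm hl hr (u ++ [p]) (q :: v) (by grind)
    have hq := starWord_mul_mul_starWord_mul_eq_zero hx hm hl hr (u ++ [q]) (p :: v) (by grind)
    simp only [starWord_append, starWord_cons, starWord_nil, mul_one] at hpq hp hq ⊢
    linear_combination (norm := noncomm_ring) move - hpq + hp + hq
  termination_by v.length

theorem three_skew_adjacent_starWord_eq_zero (hx : ∀ i, x i ^ 3 = 0) {a b c : R}
    (ha : a ∈ skewAdjoint R) (hb : b ∈ skewAdjoint R) (hc : c ∈ skewAdjoint R)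
    (u v w : List (ι × Bool)) (h : 2 * Fintype.card ι + 2 ≤ u.length + v.length + w.length) :
    starWord x u * a * starWord x v * b * c * starWord x w = 0 := by
  have key := starWord_mul_mul_starWord_mul_eq_zero hx (e := a) (g := b * c) le_rfl
    (fun s hs u v w _ => by
      linear_combination (norm := noncomm_ring)
        starWord x u * four_skew_interleaved_eq_zero (starWord x v) (starWord x w) 1 hs ha hb hc)
    (fun s hs u v w _ => by
      linear_combination (norm := noncomm_ring)
        starWord x u * four_skew_interleaved_eq_zero (starWord x v) (starWord x w) 1 ha hs hb hc)
    (u ++ transposeWord w) v (by grind [length_transposeWord])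
  have move := three_skew_insert_mul (starWord x v) (starWord x w) ha hb hc
  rw [star_starWord] at move
  rw [starWord_append] at key
  linear_combination (norm := noncomm_ring) starWord x u * move + key

theorem three_skew_starWord_eq_zero (hx : ∀ i, x i ^ 3 = 0) {a b c : R}
    (ha : a ∈ skewAdjoint R) (hb : b ∈ skewAdjoint R) (hc : c ∈ skewAdjoint R)
    (u v w t : List (ι × Bool))
    (h : 2 * Fintype.card ι + 2 ≤ u.length + v.length + w.length + t.length) :
    starWord x u * a * starWord x v * b * starWord x w * c * starWord x t = 0 := by
  have left := three_skew_adjacent_starWord_eq_zero hx ha hb hc u (v ++ transposeWord w) t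
    (by grind [length_transposeWord])
  have right := three_skew_adjacent_starWord_eq_zero hx ha hb hc u v (transposeWord w ++ t)
    (by grind [length_transposeWord])
  have move := skew_mul_mul_skew (starWord x w) hb hc
  rw [star_starWord] at move
  rw [starWord_append] at left right
  linear_combination (norm := noncomm_ring)
    starWord x u * a * starWord x v * move * starWord x t - left - right

theorem two_skew_adjacent_starWord_eq_zero (hx : ∀ i, x i ^ 3 = 0) {a b : R}
    (ha : a ∈ skewAdjoint R) (hb : b ∈ skewAdjoint R) (u v : List (ι × Bool))
    (h : 2 * Fintype.card ι + 4 ≤ u.length + v.length) :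
    starWord x u * a * b * starWord x v = 0 := by
  have key := starWord_mul_mul_starWord_mul_eq_zero hx (e := a * b) (g := 1) (by omega)
    (fun s hs u v w h => by
      have := three_skew_starWord_eq_zero hx hs ha hb u v [] w (by grind)
      simpa only [starWord_nil, mul_one, mul_assoc] using this)
    (fun s hs u v w h => by
      have := three_skew_starWord_eq_zero hx ha hb hs u [] v w (by grind)
      simpa only [starWord_nil, mul_one, mul_assoc] using this) u v h
  simpa only [mul_one, mul_assoc] using key

theorem two_skew_starWord_eq_zero (hx : ∀ i, x i ^ 3 = 0) {a b : R}
    (ha : a ∈ skewAdjoint R) (hb : b ∈ skewAdjoint R) (u v w : List (ι × Bool))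
    (h : 2 * Fintype.card ι + 4 ≤ u.length + v.length + w.length) :
    starWord x u * a * starWord x v * b * starWord x w = 0 := by
  have left := two_skew_adjacent_starWord_eq_zero hx ha hb (u ++ transposeWord v) w
    (by grind [length_transposeWord])
  have right := two_skew_adjacent_starWord_eq_zero hx ha hb u (transposeWord v ++ w)
    (by grind [length_transposeWord])
  have move := skew_mul_mul_skew (starWord x v) ha hb
  rw [star_starWord] at move
  rw [starWord_append] at left right
  linear_combination (norm := noncomm_ring) starWord x u * move * starWord x w - left - right

theorem skew_starWord_eq_zero (hx : ∀ i, x i ^ 3 = 0) {a : R} (ha : a ∈ skewAdjoint R)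
    (u v : List (ι × Bool)) (h : 2 * Fintype.card ι + 6 ≤ u.length + v.length) :
    starWord x u * a * starWord x v = 0 := by
  rw [← mul_one (_ * starWord x v)]
  refine starWord_mul_mul_starWord_mul_eq_zero hx (by omega)
    (fun s hs u v w h => ?_) (fun s hs u v w h => ?_) u v h
  · rw [mul_one]
    exact two_skew_starWord_eq_zero hx hs ha u v w (by omega)
  · rw [mul_one]
    exact two_skew_starWord_eq_zero hx ha hs u v w (by omega)

theorem starWord_eq_zero (hx : ∀ i, x i ^ 3 = 0) {l : List (ι × Bool)}
    (hl : 2 * Fintype.card ι + 8 ≤ l.length) : starWord x l = 0 := by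
  rw [← mul_one (starWord x l)]
  refine starWord_mul_eq_zero hx (by omega) fun s hs u v h => ?_
  rw [mul_one]
  exact skew_starWord_eq_zero hx hs u v (by omega)

end StarWords

section Transpose

variable {F d}

theorem tp_add (a b : FA F d) : tp F d (a + b) = tp F d a + tp F d b := by simp [tp]

theorem tp_mul (a b : FA F d) : tp F d (a * b) = tp F d b * tp F d a := by simp [tp]

theorem tp_smul (r : F) (a : FA F d) : tp F d (r • a) = r • tp F d a := by simp [tp]

theorem tp_ι (s : Ltr d) : tp F d (FreeAlgebra.ι F s) = FreeAlgebra.ι F (s.1, !s.2) := by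
  simp [tp]

theorem tp_tp (a : FA F d) : tp F d (tp F d a) = a := by
  induction a using FreeAlgebra.induction with
  | grade0 r => simp [tp]
  | grade1 s => simp [tp_ι]
  | mul a b ha hb => rw [tp_mul, tp_mul, ha, hb]
  | add a b ha hb => rw [tp_add, tp_add, ha, hb]

theorem tp_wordOf (l : List (Ltr d)) : tp F d (wordOf F d l) = wordOf F d (transposeWord l) := by
  induction l with
  | nil => simp [wordOf, tp, transposeWord]
  | cons s l ih =>
    have hcons : wordOf F d (s :: l) = FreeAlgebra.ι F s * wordOf F d l := by simp [wordOf]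
    rw [hcons, tp_mul, ih, tp_ι, transposeWord_cons]
    simp [wordOf]

theorem tp_mem_MFsub {a : FA F d} (ha : a ∈ MFsub F d) : tp F d a ∈ MFsub F d := by
  induction ha using Submodule.span_induction with
  | mem a h =>
    obtain ⟨l, hl, rfl⟩ := h
    rw [tp_wordOf]
    exact Submodule.subset_span ⟨_, by simpa [← List.length_pos_iff] using hl, rfl⟩
  | zero => simp [tp]
  | add a b _ _ ha hb => exact tp_add a b ▸ add_mem ha hb
  | smul r a _ ha => exact tp_smul r a ▸ Submodule.smul_mem _ r ha

theorem tp_Trel (a b c : FA F d) : tp F d (Trel F d a b c) = Trel F d (tp F d a) c b := by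
  have tp_bar (a : FA F d) : tp F d (bar F d a) = -bar F d a := by
    have htp := tp_tp a
    simp only [bar, tp, map_sub, unop_sub] at htp ⊢
    rw [htp, neg_sub]
  simp only [Trel, tp_add, tp_mul, tp_bar, tp_tp]
  noncomm_ring

theorem ι_mem_MFsub (s : Ltr d) : FreeAlgebra.ι F s ∈ MFsub F d :=
  Submodule.subset_span ⟨[s], by simp, by simp [wordOf]⟩

theorem exists_eq_algebraMap_add (a : FA F d) : ∃ r : F, ∃ m ∈ MFsub F d,
    a = algebraMap F (FA F d) r + m := by
  suffices h : a ∈ Submodule.span F {1} ⊔ MFsub F d by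
    obtain ⟨_, hr, m, hm, rfl⟩ := Submodule.mem_sup.mp h
    obtain ⟨r, rfl⟩ := Submodule.mem_span_singleton.mp hr
    exact ⟨r, m, hm, by rw [Algebra.algebraMap_eq_smul_one]⟩
  have ha : a ∈ Subalgebra.toSubmodule (Algebra.adjoin F (Set.range (FreeAlgebra.ι F))) := by
    simp [FreeAlgebra.adjoin_range_ι]
  rw [Algebra.adjoin_eq_span, ← FreeMonoid.mrange_lift] at ha
  refine Submodule.span_le.mpr ?_ ha
  rintro _ ⟨l, rfl⟩
  obtain rfl | hl := eq_or_ne l 1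
  · exact Submodule.mem_sup_left (by simp [Submodule.mem_span_singleton_self])
  · exact Submodule.mem_sup_right (Submodule.subset_span ⟨l.toList, hl, FreeMonoid.lift_apply ..⟩)

end Transpose

section Quotient

/-- The unitization `F ⊕ A_{3,d}`, as the quotient of the unital free algebra by `idealA`. -/
abbrev UnitalA3 := (idealA F d).ringCon.Quotient

variable {F d}

theorem mk'_eq_zero_iff {a : FA F d} : (idealA F d).ringCon.mk' a = 0 ↔ a ∈ idealA F d := by
  rw [← TwoSidedIdeal.mem_ker, TwoSidedIdeal.ker_ringCon_mk']

theorem pow_three_mem_idealA {a : FA F d} (ha : a ∈ MFsub F d) : a ^ 3 ∈ idealA F d :=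
  TwoSidedIdeal.subset_span (Or.inl ⟨a, ha, rfl⟩)

theorem Trel_mem_idealA_of_mem_MFsub {a b c : FA F d} (ha : a ∈ MFsub F d) (hb : b ∈ MFsub F d)
    (hc : c ∈ MFsub F d) : Trel F d a b c ∈ idealA F d :=
  TwoSidedIdeal.subset_span (Or.inr ⟨a, ha, b, hb, c, hc, rfl⟩)

variable (F d) in
/-- The transpose followed by the projection to `UnitalA3`, as a ring homomorphism to the opposite
ring; it descends to the involution of `UnitalA3`. -/
def mkTranspose : FA F d →+* (UnitalA3 F d)ᵐᵒᵖ :=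
  (RingHom.op (idealA F d).ringCon.mk').comp
    (FreeAlgebra.lift F fun s : Ltr d => op (FreeAlgebra.ι F (s.1, !s.2))).toRingHom

theorem mkTranspose_apply (a : FA F d) :
    mkTranspose F d a = op ((idealA F d).ringCon.mk' (tp F d a)) := rfl

theorem ringCon_idealA_le_ker_mkTranspose :
    (idealA F d).ringCon ≤ RingCon.ker (mkTranspose F d) := by
  suffices idealA F d ≤ TwoSidedIdeal.ker (mkTranspose F d) from
    TwoSidedIdeal.ringCon_le_iff.mp this
  refine TwoSidedIdeal.span_le.mpr ?_
  rintro _ (⟨a, ha, rfl⟩ | ⟨a, ha, b, hb, c, hc, rfl⟩) <;>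
    rw [SetLike.mem_coe, TwoSidedIdeal.mem_ker, mkTranspose_apply, op_eq_zero_iff, mk'_eq_zero_iff]
  · simpa only [pow_succ, pow_zero, one_mul, tp_mul, mul_assoc] using
      pow_three_mem_idealA (tp_mem_MFsub ha)
  · exact tp_Trel a b c ▸ Trel_mem_idealA_of_mem_MFsub (tp_mem_MFsub ha) hc hb

instance : StarRing (UnitalA3 F d) where
  star a := ((idealA F d).ringCon.lift (mkTranspose F d) ringCon_idealA_le_ker_mkTranspose a).unop
  star_involutive a := by
    obtain ⟨a, rfl⟩ := RingCon.mk'_surjective _ a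
    simp only [RingCon.lift_mk', mkTranspose_apply, unop_op, tp_tp]
  star_mul a b := by rw [map_mul, unop_mul]
  star_add a b := by rw [map_add, unop_add]

theorem star_mk' (a : FA F d) :
    star ((idealA F d).ringCon.mk' a) = (idealA F d).ringCon.mk' (tp F d a) := rfl

theorem starWord_mk'_ι (l : List (Ltr d)) :
    starWord (fun i => (idealA F d).ringCon.mk' (FreeAlgebra.ι F (i, false))) l =
      (idealA F d).ringCon.mk' (wordOf F d l) := by
  rw [wordOf, map_list_prod, List.map_map, starWord]
  congr 2
  funext s
  obtain ⟨i, _ | _⟩ := s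
  · rfl
  · exact (star_mk' _).trans (congrArg _ (tp_ι _))

variable [CharP F 3]

theorem mk'_algebraMap_add_pow_three (r : F) {a : FA F d} (ha : a ∈ MFsub F d) :
    (idealA F d).ringCon.mk' (algebraMap F (FA F d) r + a) ^ 3 =
      (idealA F d).ringCon.mk' (algebraMap F (FA F d) (r ^ 3)) := by
  rw [← map_pow, add_pow_char_of_commute 3 (Algebra.commutes r a), map_add,
    mk'_eq_zero_iff.mpr (pow_three_mem_idealA ha), add_zero, map_pow (algebraMap F _)]

theorem Trel_algebraMap_add (r s t : F) (a b c : FA F d) :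
    Trel F d (algebraMap F _ r + a) (algebraMap F _ s + b) (algebraMap F _ t + c) =
      Trel F d a b c := by
  have tp_algebraMap_add (r : F) (a : FA F d) :
      tp F d (algebraMap F _ r + a) = algebraMap F _ r + tp F d a := by simp [tp]
  have bar_algebraMap_add (r : F) (a : FA F d) :
      bar F d (algebraMap F _ r + a) = bar F d a := by
    rw [bar, bar, tp_algebraMap_add, add_sub_add_left_eq_sub]
  have three_eq_zero : (3 : FA F d) = 0 := CharP.cast_eq_zero (FA F d) 3
  simp only [Trel, bar_algebraMap_add, tp_algebraMap_add]
  linear_combination (norm := noncomm_ring)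
    three_eq_zero * algebraMap F _ r * bar F d b * bar F d c -
      Algebra.commutes r (bar F d b) * bar F d c -
      Algebra.commutes r (bar F d b * bar F d c)

theorem Trel_mem_idealA (a b c : FA F d) : Trel F d a b c ∈ idealA F d := by
  obtain ⟨r, a, ha, rfl⟩ := exists_eq_algebraMap_add a
  obtain ⟨s, b, hb, rfl⟩ := exists_eq_algebraMap_add b
  obtain ⟨t, c, hc, rfl⟩ := exists_eq_algebraMap_add c
  rw [Trel_algebraMap_add]
  exact Trel_mem_idealA_of_mem_MFsub ha hb hc

instance : CubicMixedRing (UnitalA3 F d) where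
  three_eq_zero := by
    have h := congrArg (idealA F d).ringCon.mk' (CharP.cast_eq_zero (FA F d) 3)
    rwa [map_natCast, map_zero, Nat.cast_ofNat] at h
  add_pow_three a b := by
    obtain ⟨a, rfl⟩ := RingCon.mk'_surjective _ a
    obtain ⟨b, rfl⟩ := RingCon.mk'_surjective _ b
    obtain ⟨r, a, ha, rfl⟩ := exists_eq_algebraMap_add a
    obtain ⟨s, b, hb, rfl⟩ := exists_eq_algebraMap_add b
    rw [← map_add, add_add_add_comm, ← map_add, mk'_algebraMap_add_pow_three r ha,
      mk'_algebraMap_add_pow_three s hb, mk'_algebraMap_add_pow_three _ (add_mem ha hb),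
      add_pow_char, map_add, map_add]
  mixed_eq_zero a b c := by
    obtain ⟨a, rfl⟩ := RingCon.mk'_surjective _ a
    obtain ⟨b, rfl⟩ := RingCon.mk'_surjective _ b
    obtain ⟨c, rfl⟩ := RingCon.mk'_surjective _ c
    simpa only [Trel, bar, map_add, map_sub, map_mul, star_mk'] using
      mk'_eq_zero_iff.mpr (Trel_mem_idealA a b c)

end Quotient

theorem stmt15_general (F : Type) [Field F] [CharP F 3] (d : ℕ) (l : List (Ltr d))
    (h : wordOf F d l ∉ idealA F d) : l.length ≤ 2 * d + 7 := by
  contrapose! h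
  rw [← mk'_eq_zero_iff, ← starWord_mk'_ι]
  refine starWord_eq_zero (fun i => ?_) (by rw [Fintype.card_fin]; omega)
  rw [← map_pow, mk'_eq_zero_iff]
  exact pow_three_mem_idealA (ι_mem_MFsub _)

/-- if `char F = 3`, then every word which is nonzero in `A_{3,d}` has length at
most `2d + 7`. -/
theorem stmt15 (F : Type) [Field F] [Infinite F] [CharP F 3] (d : ℕ)
    (l : List (Ltr d)) (hl : l ≠ []) (h : wordOf F d l ∉ idealA F d) :
    l.length ≤ 2 * d + 7 := by
  exact stmt15_general F d l h
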